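/- Let α > 1 and let F be analytic on the unit disc 𝔻 with ‖F‖_{A¹_α} = (1/π) ∫_𝔻 |F(z)| (1−|z|²)^{α−2} dz < ∞. For 0 < R < 1 and a measurable set Ω ⊆ 𝔻, define the hyperbolic maximum Nyquist density ρ_𝔻(Ω,R) = sup_{z∈𝔻} |Ω ∩ B_{ϱ_𝔻}(z,R)|_𝔻, where B_{ϱ_𝔻}(z,R) = {w ∈ 𝔻 : |(z−w)/(1−z̄w)| < R} is the pseudohyperbolic ball and |E|_𝔻 = ∫_E (1−|z|²)^{−2} dz the hyperbolic measure. Then, with C^α(R) = (1/(α−1))(1 − (1−R²)^{α−1}): (1/π) ∫_Ω |F(z)| (1−|z|²)^{α−2} dz ≤ (2 ρ_𝔻(Ω,R) / C^α(R)) · ‖F‖_{A¹_α}. -/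

import Mathlib

open MeasureTheory

/-- The hyperbolic measure `|E|_𝔻 = ∫_E (1 - |z|²)^{-2} dz` on the unit disc. -/
noncomputable def hyperbolicMeasure : Measure ℂ :=
  volume.withDensity (fun z => ENNReal.ofReal (((1 - ‖z‖ ^ 2) ^ 2)⁻¹))

/-- The pseudohyperbolic ball `B_{ϱ_𝔻}(z, R) = {w ∈ 𝔻 : |(z - w)/(1 - z̄ w)| < R}`. -/
def pseudohyperbolicBall (z : ℂ) (R : ℝ) : Set ℂ :=
  {w : ℂ | ‖w‖ < 1 ∧ ‖(z - w) / (1 - starRingEnd ℂ z * w)‖ < R}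

/-- The hyperbolic maximum Nyquist density `ρ_𝔻(Ω, R) = sup_{z ∈ 𝔻} |Ω ∩ B_{ϱ_𝔻}(z, R)|_𝔻`. -/
noncomputable def hypMaxNyquistDensity (Ω : Set ℂ) (R : ℝ) : ℝ :=
  ⨆ z : Metric.ball (0 : ℂ) 1,
    (hyperbolicMeasure (Ω ∩ pseudohyperbolicBall (z : ℂ) R)).toReal


namespace LSB
open Complex

/-- the disc automorphism -/
noncomputable def phi (w u : ℂ) : ℂ := (w - u) / (1 - starRingEnd ℂ w * u)

lemma den_re_pos {w u : ℂ} (hw : ‖w‖ < 1) (hu : ‖u‖ < 1) :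
    0 < (1 - starRingEnd ℂ w * u).re := by
  have h1 : ‖starRingEnd ℂ w * u‖ < 1 := by
    rw [norm_mul, RCLike.norm_conj]
    nlinarith [norm_nonneg w, norm_nonneg u]
  have h2 := (Complex.re_le_norm (starRingEnd ℂ w * u))
  simp only [Complex.sub_re, Complex.one_re]
  linarith

lemma den_ne {w u : ℂ} (hw : ‖w‖ < 1) (hu : ‖u‖ < 1) :
    (1 - starRingEnd ℂ w * u) ≠ 0 := by
  intro h
  have := den_re_pos hw hu
  rw [h] at this
  simp at this

lemma one_sub_phi {w u : ℂ} (hw : ‖w‖ < 1) (hu : ‖u‖ < 1) :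
    1 - ‖phi w u‖ ^ 2 = (1 - ‖w‖ ^ 2) * (1 - ‖u‖ ^ 2) / ‖1 - starRingEnd ℂ w * u‖ ^ 2 := by
  have h := den_ne hw hu
  have h' : ‖1 - starRingEnd ℂ w * u‖ ^ 2 ≠ 0 := by positivity
  rw [phi, norm_div, div_pow, eq_div_iff h', sub_mul, div_mul_cancel₀ _ h']
  simp only [← Complex.normSq_eq_norm_sq, Complex.normSq_apply]
  simp
  ring

lemma one_sub_pos {u : ℂ} (hu : ‖u‖ < 1) : 0 < 1 - ‖u‖ ^ 2 := by
  nlinarith [norm_nonneg u]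

lemma phi_lt {w u : ℂ} (hw : ‖w‖ < 1) (hu : ‖u‖ < 1) : ‖phi w u‖ < 1 := by
  have h := one_sub_phi hw hu
  have h0 := den_ne hw hu
  have : 0 < 1 - ‖phi w u‖ ^ 2 := by
    rw [h]
    have := one_sub_pos hw
    have := one_sub_pos hu
    positivity
  nlinarith [norm_nonneg (phi w u)]

lemma phi_phi {w u : ℂ} (hw : ‖w‖ < 1) (hu : ‖u‖ < 1) : phi w (phi w u) = u := by
  have h1 := den_ne hw hu
  have h2 := den_ne hw (phi_lt hw hu)
  have h3 := den_ne hw hw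
  rw [phi, div_eq_iff h2]
  have e : phi w u * (1 - starRingEnd ℂ w * u) = w - u := by
    rw [phi, div_mul_cancel₀ _ h1]
  linear_combination -e

lemma image_phi {w : ℂ} {R : ℝ} (hw : ‖w‖ < 1) (hR : R < 1) :
    phi w '' Metric.ball 0 R = pseudohyperbolicBall w R := by
  ext z
  simp only [Set.mem_image, Metric.mem_ball, dist_zero_right, pseudohyperbolicBall,
    Set.mem_ofPred_eq]
  constructor
  · rintro ⟨u, hu, rfl⟩
    have hu1 := hu.trans hR
    refine ⟨phi_lt hw hu1, ?_⟩
    have := phi_phi hw hu1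
    rw [phi] at this
    rwa [this]
  · rintro ⟨h1, h2⟩
    exact ⟨phi w z, h2, phi_phi hw h1⟩

lemma hasDeriv_phi {w u : ℂ} (hw : ‖w‖ < 1) (hu : ‖u‖ < 1) :
    HasDerivAt (phi w) ((starRingEnd ℂ w * w - 1) / (1 - starRingEnd ℂ w * u) ^ 2) u := by
  have h1 : HasDerivAt (fun u : ℂ => w - u) (-1) u := by
    simpa using (hasDerivAt_id u).const_sub w
  have h2 : HasDerivAt (fun u : ℂ => 1 - starRingEnd ℂ w * u) (-(starRingEnd ℂ w)) u := by
    simpa using ((hasDerivAt_id u).const_mul (starRingEnd ℂ w)).const_sub 1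
  have := h1.div h2 (den_ne hw hu)
  refine this.congr_deriv ?_
  congr 1
  ring

lemma det_smulRight (c : ℂ) :
    |((ContinuousLinearMap.toSpanSingleton ℂ c).restrictScalars ℝ : ℂ →L[ℝ] ℂ).det|
      = ‖c‖ ^ 2 := by
  have : ((ContinuousLinearMap.toSpanSingleton ℂ c).restrictScalars ℝ : ℂ →L[ℝ] ℂ).det
      = ‖c‖ ^ 2 := by
    rw [ContinuousLinearMap.det]
    rw [← LinearMap.det_toMatrix Complex.basisOneI, Matrix.det_fin_two]
    simp [LinearMap.toMatrix_apply, ← Complex.normSq_eq_norm_sq, Complex.normSq_apply]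
  rw [this, abs_of_nonneg (by positivity)]

lemma meas_dens : Measurable (fun z : ℂ => ENNReal.ofReal (((1 - ‖z‖ ^ 2) ^ 2)⁻¹)) := by
  fun_prop

lemma setLIntegral_hyp (s : Set ℂ) (hs : MeasurableSet s) (f : ℂ → ENNReal) :
    ∫⁻ z in s, f z ∂hyperbolicMeasure
      = ∫⁻ z in s, ENNReal.ofReal (((1 - ‖z‖ ^ 2) ^ 2)⁻¹) * f z := by
  rw [hyperbolicMeasure, setLIntegral_withDensity_eq_setLIntegral_mul_non_measurable₀ _ _ _ hs]
  · rfl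
  · exact Filter.Eventually.of_forall fun _ => ENNReal.ofReal_lt_top
  · exact meas_dens.aemeasurable

lemma measurableSet_pair (R : ℝ) :
    MeasurableSet {p : ℂ × ℂ | p.2 ∈ pseudohyperbolicBall p.1 R} := by
  have h1 : Measurable fun p : ℂ × ℂ => ‖p.2‖ := by fun_prop
  have hc : Measurable fun p : ℂ × ℂ => starRingEnd ℂ p.1 :=
    (Complex.continuous_conj.comp continuous_fst).measurable
  have h2 : Measurable fun p : ℂ × ℂ => ‖(p.1 - p.2) / (1 - starRingEnd ℂ p.1 * p.2)‖ := by
    fun_prop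
  exact (measurableSet_lt h1 measurable_const).inter (measurableSet_lt h2 measurable_const)

lemma measurableSet_pb (w : ℂ) (R : ℝ) : MeasurableSet (pseudohyperbolicBall w R) :=
  (measurableSet_pair R).preimage (measurable_prodMk_left (x := w))

lemma invariance {w : ℂ} {R : ℝ} (hw : ‖w‖ < 1) (hR : R < 1) (f : ℂ → ENNReal) :
    ∫⁻ z in pseudohyperbolicBall w R, f z ∂hyperbolicMeasure
      = ∫⁻ u in Metric.ball 0 R, f (phi w u) ∂hyperbolicMeasure := by
  rw [setLIntegral_hyp _ (measurableSet_pb w R), setLIntegral_hyp _ measurableSet_ball,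
    ← image_phi hw hR]
  rw [lintegral_image_eq_lintegral_abs_det_fderiv_mul volume measurableSet_ball
    (f' := fun u => ((ContinuousLinearMap.toSpanSingleton ℂ
      ((starRingEnd ℂ w * w - 1) / (1 - starRingEnd ℂ w * u) ^ 2)).restrictScalars ℝ))]
  · refine setLIntegral_congr_fun measurableSet_ball fun u hu => ?_
    have hu1 : ‖u‖ < 1 := by
      rw [Metric.mem_ball, dist_zero_right] at hu
      exact hu.trans hR
    rw [← mul_assoc, det_smulRight, ← ENNReal.ofReal_mul (by positivity)]
    congr 2
    rw [one_sub_phi hw hu1]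
    have e1 : ‖(starRingEnd ℂ w * w - 1 : ℂ)‖ = 1 - ‖w‖ ^ 2 := by
      rw [← Complex.normSq_eq_conj_mul_self, Complex.normSq_eq_norm_sq, norm_sub_rev]
      rw [← Complex.ofReal_one, ← Complex.ofReal_sub, Complex.norm_real, Real.norm_eq_abs,
        abs_of_pos (one_sub_pos hw)]
    rw [norm_div, norm_pow, e1]
    have := (one_sub_pos hw).ne'
    have := (one_sub_pos hu1).ne'
    have : ‖1 - starRingEnd ℂ w * u‖ ≠ 0 := norm_ne_zero_iff.2 (den_ne hw hu1)
    field_simp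
  · intro u hu
    have hu1 : ‖u‖ < 1 := by
      rw [Metric.mem_ball, dist_zero_right] at hu
      exact hu.trans hR
    exact ((hasDeriv_phi hw hu1).hasFDerivAt.restrictScalars ℝ).hasFDerivWithinAt
  · intro u hu v hv huv
    have hu1 : ‖u‖ < 1 := by
      rw [Metric.mem_ball, dist_zero_right] at hu
      exact hu.trans hR
    have hv1 : ‖v‖ < 1 := by
      rw [Metric.mem_ball, dist_zero_right] at hv
      exact hv.trans hR
    rw [← phi_phi hw hu1, huv, phi_phi hw hv1]

lemma mem_pb_symm {w z : ℂ} {R : ℝ} (hw : ‖w‖ < 1) (h : z ∈ pseudohyperbolicBall w R) :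
    w ∈ pseudohyperbolicBall z R := by
  refine ⟨hw, ?_⟩
  have := h.2
  rw [norm_div] at this ⊢
  rw [norm_sub_rev z w]
  have e : ‖1 - starRingEnd ℂ z * w‖ = ‖1 - starRingEnd ℂ w * z‖ := by
    rw [← RCLike.norm_conj]
    simp [mul_comm]
  rwa [e]

end LSB

namespace LSB
open Complex

lemma circle_mean {H : ℂ → ℂ} (hH : DifferentiableOn ℂ H (Metric.ball 0 1)) {r : ℝ}
    (hr0 : 0 < r) (hr1 : r < 1) :
    ENNReal.ofReal (2 * Real.pi) * ‖H 0‖ₑ ≤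
      ∫⁻ θ in Set.Ioo (-Real.pi) Real.pi, ‖H (circleMap 0 r θ)‖ₑ := by
  have h1 : DiffContOnCl ℂ H (Metric.ball 0 |r|) := by
    rw [abs_of_pos hr0]
    refine DifferentiableOn.diffContOnCl (hH.mono ?_)
    exact Metric.closure_ball_subset_closedBall.trans (Metric.closedBall_subset_ball hr1)
  have h2 := h1.circleAverage
  rw [Real.circleAverage_def] at h2
  have hper : Function.Periodic (fun θ => H (circleMap 0 r θ)) (2 * Real.pi) := fun θ => by
    simp only [periodic_circleMap 0 r θ]
  have h3 := hper.intervalIntegral_add_eq 0 (-Real.pi)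
  have e : -Real.pi + 2 * Real.pi = Real.pi := by ring
  rw [zero_add, e] at h3
  rw [h3, intervalIntegral.integral_of_le (by linarith [Real.pi_pos]),
    integral_Ioc_eq_integral_Ioo] at h2
  have h4 : ∫ θ in Set.Ioo (-Real.pi) Real.pi, H (circleMap 0 r θ) = (2 * Real.pi) • H 0 := by
    rw [← h2, smul_smul, mul_inv_cancel₀ (by positivity), one_smul]
  have h5 := enorm_integral_le_lintegral_enorm
    (μ := volume.restrict (Set.Ioo (-Real.pi) Real.pi)) (fun θ => H (circleMap 0 r θ))
  rw [h4, enorm_smul] at h5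
  rwa [Real.enorm_eq_ofReal (by positivity)] at h5

lemma radial {α R : ℝ} (hα : 1 < α) (hR0 : 0 < R) (hR1 : R < 1) :
    ∫⁻ r in Set.Ioo 0 R, ENNReal.ofReal (r * (1 - r ^ 2) ^ (α - 2)) =
      ENNReal.ofReal ((1 / (α - 1)) * (1 - (1 - R ^ 2) ^ (α - 1)) / 2) := by
  have hpos : ∀ r ∈ Set.Icc 0 R, 0 < 1 - r ^ 2 := fun r hr => by nlinarith [hr.1, hr.2]
  have hc : ContinuousOn (fun r : ℝ => r * (1 - r ^ 2) ^ (α - 2)) (Set.Icc 0 R) := by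
    refine continuousOn_id.mul (ContinuousOn.rpow_const (by fun_prop) fun r hr => ?_)
    exact Or.inl (hpos r hr).ne'
  have hi : IntegrableOn (fun r : ℝ => r * (1 - r ^ 2) ^ (α - 2)) (Set.Icc 0 R) :=
    hc.integrableOn_compact isCompact_Icc
  rw [← ofReal_integral_eq_lintegral_ofReal (hi.mono_set Set.Ioo_subset_Icc_self)]
  · congr 1
    rw [← integral_Ioc_eq_integral_Ioo, ← intervalIntegral.integral_of_le hR0.le]
    have hα1 : α - 1 ≠ 0 := by linarith
    have := intervalIntegral.integral_eq_sub_of_hasDerivAt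
      (f := fun r : ℝ => - (1 - r ^ 2) ^ (α - 1) / (2 * (α - 1)))
      (f' := fun r : ℝ => r * (1 - r ^ 2) ^ (α - 2)) (a := 0) (b := R) ?_ ?_
    · rw [this]
      simp
      field_simp
      ring
    · intro r hr
      rw [Set.uIcc_of_le hR0.le] at hr
      have h1 : HasDerivAt (fun r : ℝ => 1 - r ^ 2) (-(2 * r)) r := by
        simpa using (hasDerivAt_pow 2 r).const_sub 1
      have h2 := (h1.rpow_const (p := α - 1) (Or.inl (hpos r hr).ne')).neg.div_const (2 * (α - 1))
      refine h2.congr_deriv ?_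
      rw [show α - 1 - 1 = α - 2 by ring]
      field_simp
    · exact (hc.mono (by rw [Set.uIcc_of_le hR0.le])).intervalIntegrable
  · refine (ae_restrict_iff' measurableSet_Ioo).2 (Filter.Eventually.of_forall fun r hr => ?_)
    have := hpos r ⟨hr.1.le, hr.2.le⟩
    have := hr.1
    simp only [Pi.zero_apply]
    positivity

lemma polar_eq (p : ℝ × ℝ) : Complex.polarCoord.symm p = circleMap 0 p.1 p.2 := by
  simp [Complex.polarCoord_symm_apply, circleMap, Complex.exp_mul_I]

lemma submean {H : ℂ → ℂ} (hH : DifferentiableOn ℂ H (Metric.ball 0 1)) {α R : ℝ}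
    (hα : 1 < α) (hR0 : 0 < R) (hR1 : R < 1) :
    ENNReal.ofReal (Real.pi * ((1 / (α - 1)) * (1 - (1 - R ^ 2) ^ (α - 1)))) * ‖H 0‖ₑ ≤
      ∫⁻ u in Metric.ball 0 R, ENNReal.ofReal ((1 - ‖u‖ ^ 2) ^ (α - 2)) * ‖H u‖ₑ := by
  set S := Set.Ioo (0 : ℝ) R ×ˢ Set.Ioo (-Real.pi) Real.pi with hS
  have hSm : MeasurableSet S := measurableSet_Ioo.prod measurableSet_Ioo
  have hnorm : ∀ p ∈ S, ‖circleMap 0 p.1 p.2‖ = p.1 := fun p hp => by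
    rw [norm_circleMap_zero, abs_of_pos hp.1.1]
  have step1 : ∫⁻ p in S, ENNReal.ofReal (p.1 * (1 - p.1 ^ 2) ^ (α - 2)) *
        ‖H (circleMap 0 p.1 p.2)‖ₑ ≤
      ∫⁻ u in Metric.ball 0 R, ENNReal.ofReal ((1 - ‖u‖ ^ 2) ^ (α - 2)) * ‖H u‖ₑ := by
    rw [← lintegral_indicator measurableSet_ball, ← Complex.lintegral_comp_polarCoord_symm]
    have hsub : S ⊆ polarCoord.target := by
      rw [polarCoord_target]
      exact Set.prod_mono (fun r hr => hr.1) subset_rfl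
    refine le_trans (le_of_eq ?_) (lintegral_mono_set hsub)
    refine setLIntegral_congr_fun hSm fun p hp => ?_
    rw [polar_eq, Set.indicator_of_mem, hnorm p hp, smul_eq_mul, ← mul_assoc,
      ENNReal.ofReal_mul hp.1.1.le]
    rw [Metric.mem_ball, dist_zero_right, hnorm p hp]
    exact hp.1.2
  refine le_trans ?_ step1
  have hmeas : AEMeasurable (fun p : ℝ × ℝ => ENNReal.ofReal (p.1 * (1 - p.1 ^ 2) ^ (α - 2)) *
        ‖H (circleMap 0 p.1 p.2)‖ₑ) (((volume : Measure ℝ).restrict (Set.Ioo 0 R)).prod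
          ((volume : Measure ℝ).restrict (Set.Ioo (-Real.pi) Real.pi))) := by
    rw [Measure.prod_restrict]
    refine AEMeasurable.mul (f := fun p : ℝ × ℝ =>
      ENNReal.ofReal (p.1 * (1 - p.1 ^ 2) ^ (α - 2))) (Measurable.aemeasurable (by fun_prop)) ?_
    have hcm : Continuous (fun p : ℝ × ℝ => circleMap 0 p.1 p.2) := by
      unfold circleMap; fun_prop
    have : ContinuousOn (fun p : ℝ × ℝ => H (circleMap 0 p.1 p.2)) S := by
      refine hH.continuousOn.comp hcm.continuousOn fun p hp => ?_
      rw [Metric.mem_ball, dist_zero_right, hnorm p hp]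
      exact hp.1.2.trans hR1
    exact (this.aemeasurable hSm).enorm
  rw [Measure.volume_eq_prod, hS, ← Measure.prod_restrict, lintegral_prod _ hmeas]
  calc _ = ∫⁻ r in Set.Ioo 0 R, ENNReal.ofReal (r * (1 - r ^ 2) ^ (α - 2)) *
        (ENNReal.ofReal (2 * Real.pi) * ‖H 0‖ₑ) := by
        rw [lintegral_mul_const _ (by fun_prop), radial hα hR0 hR1,
          ← mul_assoc (ENNReal.ofReal _), ← ENNReal.ofReal_mul']
        · congr 2
          ring
        · positivity
    _ ≤ _ := by
        refine setLIntegral_mono' measurableSet_Ioo fun r hr => ?_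
        simp only
        rw [lintegral_const_mul' _ _ ENNReal.ofReal_ne_top]
        gcongr
        exact circle_mean hH hr.1 (hr.2.trans hR1)

end LSB

namespace LSB
open Complex

/-- the weighted modulus, as an extended nonnegative function -/
noncomputable def hh (α : ℝ) (F : ℂ → ℂ) (z : ℂ) : ENNReal :=
  ENNReal.ofReal ((1 - ‖z‖ ^ 2) ^ α) * ‖F z‖ₑ

lemma pointwise {α R : ℝ} (hα : 1 < α) (hR0 : 0 < R) (hR1 : R < 1) {F : ℂ → ℂ}
    (hF : DifferentiableOn ℂ F (Metric.ball 0 1)) {w : ℂ} (hw : ‖w‖ < 1) :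
    ENNReal.ofReal (Real.pi * ((1 / (α - 1)) * (1 - (1 - R ^ 2) ^ (α - 1)))) * hh α F w ≤
      ∫⁻ z in pseudohyperbolicBall w R, hh α F z ∂hyperbolicMeasure := by
  set H : ℂ → ℂ := fun u =>
    F (phi w u) * (1 - starRingEnd ℂ w * u) ^ (((-(2 * α) : ℝ)) : ℂ) with hHdef
  have hH : DifferentiableOn ℂ H (Metric.ball 0 1) := by
    intro u hu
    have hu1 : ‖u‖ < 1 := by simpa using hu
    have h1 : DifferentiableAt ℂ F (phi w u) :=
      hF.differentiableAt (Metric.isOpen_ball.mem_nhds (by simpa using phi_lt hw hu1))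
    have h2 : DifferentiableAt ℂ (fun u => F (phi w u)) u :=
      DifferentiableAt.comp u h1 (hasDeriv_phi hw hu1).differentiableAt
    have h3 : DifferentiableAt ℂ
        (fun u => (1 - starRingEnd ℂ w * u) ^ (((-(2 * α) : ℝ)) : ℂ)) u := by
      refine DifferentiableAt.cpow_const (by fun_prop) ?_
      exact Or.inl (den_re_pos hw hu1)
    exact (h2.mul h3).differentiableWithinAt
  have hs := submean hH hα hR0 hR1
  have hH0 : H 0 = F w := by simp [hHdef, phi]
  rw [hH0] at hs
  rw [invariance hw hR1, setLIntegral_hyp _ measurableSet_ball]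
  calc _ = ENNReal.ofReal ((1 - ‖w‖ ^ 2) ^ α) *
        (ENNReal.ofReal (Real.pi * ((1 / (α - 1)) * (1 - (1 - R ^ 2) ^ (α - 1)))) * ‖F w‖ₑ) := by
        rw [hh]; ring
    _ ≤ ENNReal.ofReal ((1 - ‖w‖ ^ 2) ^ α) *
        ∫⁻ u in Metric.ball 0 R, ENNReal.ofReal ((1 - ‖u‖ ^ 2) ^ (α - 2)) * ‖H u‖ₑ := by
        gcongr
    _ = _ := by
        rw [← lintegral_const_mul' _ _ ENNReal.ofReal_ne_top]
        refine setLIntegral_congr_fun measurableSet_ball fun u hu => ?_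
        have hu1 : ‖u‖ < 1 := by
          rw [Metric.mem_ball, dist_zero_right] at hu
          exact hu.trans hR1
        have hwp := one_sub_pos hw
        have hup := one_sub_pos hu1
        have hD : 0 < ‖1 - starRingEnd ℂ w * u‖ := norm_pos_iff.2 (den_ne hw hu1)
        have e1 : ‖H u‖ₑ = ENNReal.ofReal (‖1 - starRingEnd ℂ w * u‖ ^ (-(2 * α))) *
            ‖F (phi w u)‖ₑ := by
          rw [hHdef, enorm_mul, mul_comm, ← ofReal_norm (_ ^ _),
            Complex.norm_cpow_real]
        have e2 : (1 - ‖w‖ ^ 2) ^ α * ((1 - ‖u‖ ^ 2) ^ (α - 2) *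
            ‖1 - starRingEnd ℂ w * u‖ ^ (-(2 * α))) =
            ((1 - ‖u‖ ^ 2) ^ 2)⁻¹ * (1 - ‖phi w u‖ ^ 2) ^ α := by
          rw [one_sub_phi hw hu1, Real.div_rpow (by positivity) (by positivity),
            Real.mul_rpow hwp.le hup.le, Real.rpow_sub hup, Real.rpow_neg hD.le,
            Real.rpow_mul hD.le]
          simp only [Real.rpow_two]
          field_simp
        have e3 := congrArg (fun x => ENNReal.ofReal x * ‖F (phi w u)‖ₑ) e2
        rw [ENNReal.ofReal_mul (by positivity), ENNReal.ofReal_mul (by positivity),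
          ENNReal.ofReal_mul (by positivity)] at e3
        rw [e1, hh, ← mul_assoc (ENNReal.ofReal ((1 - ‖u‖ ^ 2) ^ 2)⁻¹), ← e3]
        ring

lemma hyp_le {Ω : Set ℂ} {R : ℝ} (hR1 : R < 1) {z : ℂ} (hz : ‖z‖ < 1) :
    hyperbolicMeasure (Ω ∩ pseudohyperbolicBall z R) ≤
      hyperbolicMeasure (Metric.ball 0 R) := by
  refine (measure_mono Set.inter_subset_right).trans ?_
  have := invariance hz hR1 (fun _ => 1)
  simp only [setLIntegral_one] at this
  exact this.le

lemma hyp_ball_lt_top {R : ℝ} (hR0 : 0 < R) (hR1 : R < 1) :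
    hyperbolicMeasure (Metric.ball 0 R) < ⊤ := by
  rw [hyperbolicMeasure, withDensity_apply _ measurableSet_ball]
  calc _ ≤ ∫⁻ u in Metric.ball (0 : ℂ) R, ENNReal.ofReal (((1 - R ^ 2) ^ 2)⁻¹) := by
        refine setLIntegral_mono' measurableSet_ball fun u hu => ?_
        rw [Metric.mem_ball, dist_zero_right] at hu
        have h0 : 0 < 1 - R ^ 2 := by nlinarith
        have h1 : ‖u‖ ^ 2 ≤ R ^ 2 := by gcongr
        gcongr
    _ < ⊤ := by
        rw [setLIntegral_const]
        exact ENNReal.mul_lt_top ENNReal.ofReal_lt_top measure_ball_lt_top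

lemma hyp_le_density {Ω : Set ℂ} {R : ℝ} (hR0 : 0 < R) (hR1 : R < 1) {z : ℂ} (hz : ‖z‖ < 1) :
    hyperbolicMeasure (Ω ∩ pseudohyperbolicBall z R) ≤
      ENNReal.ofReal (hypMaxNyquistDensity Ω R) := by
  have ht := hyp_ball_lt_top hR0 hR1
  rw [ENNReal.le_ofReal_iff_toReal_le ((hyp_le hR1 hz).trans_lt ht).ne]
  · refine le_ciSup (f := fun z : Metric.ball (0 : ℂ) 1 =>
      (hyperbolicMeasure (Ω ∩ pseudohyperbolicBall (z : ℂ) R)).toReal) ?_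
      (⟨z, by simpa using hz⟩ : Metric.ball (0 : ℂ) 1)
    refine ⟨(hyperbolicMeasure (Metric.ball 0 R)).toReal, ?_⟩
    rintro _ ⟨y, rfl⟩
    exact ENNReal.toReal_mono ht.ne (hyp_le hR1 (mem_ball_zero_iff.1 y.2))
  · exact Real.iSup_nonneg fun _ => ENNReal.toReal_nonneg

lemma hh_integral {α : ℝ} {F : ℂ → ℂ} {s : Set ℂ} (hs : MeasurableSet s)
    (hsub : s ⊆ Metric.ball 0 1)
    (hFint : IntegrableOn (fun z => ‖F z‖ * (1 - ‖z‖ ^ 2) ^ (α - 2))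
      (Metric.ball (0 : ℂ) 1) volume) :
    ∫⁻ z in s, hh α F z ∂hyperbolicMeasure =
      ENNReal.ofReal (∫ z in s, ‖F z‖ * (1 - ‖z‖ ^ 2) ^ (α - 2)) := by
  rw [setLIntegral_hyp _ hs, ofReal_integral_eq_lintegral_ofReal (hFint.mono_set hsub)]
  · refine setLIntegral_congr_fun hs fun z hz => ?_
    have hz1 : ‖z‖ < 1 := by simpa using hsub hz
    have hp := one_sub_pos hz1
    rw [hh, ← mul_assoc, ← ENNReal.ofReal_mul (by positivity), ← ofReal_norm,
      ← ENNReal.ofReal_mul (by positivity), Real.rpow_sub hp, Real.rpow_two]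
    congr 1
    field_simp
  · refine (ae_restrict_iff' hs).2 (Filter.Eventually.of_forall fun z hz => ?_)
    have hz1 : ‖z‖ < 1 := by simpa using hsub hz
    have hp := one_sub_pos hz1
    simp only [Pi.zero_apply]
    positivity

instance : SFinite hyperbolicMeasure := by
  unfold hyperbolicMeasure
  infer_instance

lemma main_ennreal {α R : ℝ} (hα : 1 < α) (hR0 : 0 < R) (hR1 : R < 1) {F : ℂ → ℂ}
    (hF : DifferentiableOn ℂ F (Metric.ball 0 1))
    {Ω : Set ℂ} (hΩ : MeasurableSet Ω) (hsub : Ω ⊆ Metric.ball 0 1) :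
    ENNReal.ofReal (Real.pi * ((1 / (α - 1)) * (1 - (1 - R ^ 2) ^ (α - 1)))) *
      ∫⁻ w in Ω, hh α F w ∂hyperbolicMeasure ≤
    ENNReal.ofReal (hypMaxNyquistDensity Ω R) *
      ∫⁻ z in Metric.ball 0 1, hh α F z ∂hyperbolicMeasure := by
  set g : ℂ → ENNReal := (Metric.ball (0 : ℂ) 1).indicator (hh α F) with hg
  have hgm : Measurable g := by
    have h1 : Measurable ((Metric.ball (0 : ℂ) 1).indicator F) := by
      classical
      have := hF.continuousOn.measurable_piecewise (g := (0 : ℂ → ℂ)) continuousOn_const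
        (measurableSet_ball (x := (0 : ℂ)) (ε := 1))
      rwa [Set.piecewise_eq_indicator] at this
    have h2 : g = fun z => ENNReal.ofReal ((1 - ‖z‖ ^ 2) ^ α) *
        ‖(Metric.ball (0 : ℂ) 1).indicator F z‖ₑ := by
      ext z
      by_cases hz : z ∈ Metric.ball (0 : ℂ) 1
      · simp only [hg, Set.indicator_of_mem hz, hh]
      · simp only [hg, Set.indicator_of_notMem hz, enorm_zero, mul_zero]
    rw [h2]
    exact Measurable.mul (by fun_prop) h1.enorm
  set K : ℂ → ℂ → ENNReal := fun w z =>
    {p : ℂ × ℂ | p.2 ∈ pseudohyperbolicBall p.1 R}.indicator (fun p => g p.2) (w, z) with hK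
  have hKm : Measurable (Function.uncurry K) :=
    (hgm.comp measurable_snd).indicator (measurableSet_pair R)
  calc _ = ∫⁻ w in Ω, ENNReal.ofReal (Real.pi * ((1 / (α - 1)) *
        (1 - (1 - R ^ 2) ^ (α - 1)))) * hh α F w ∂hyperbolicMeasure := by
        rw [lintegral_const_mul' _ _ ENNReal.ofReal_ne_top]
    _ ≤ ∫⁻ w in Ω, ∫⁻ z, K w z ∂hyperbolicMeasure ∂hyperbolicMeasure := by
        refine setLIntegral_mono' hΩ fun w hw => ?_
        refine (pointwise hα hR0 hR1 hF (by simpa using hsub hw)).trans (le_of_eq ?_)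
        rw [← lintegral_indicator (measurableSet_pb w R)]
        refine lintegral_congr fun z => ?_
        by_cases hz : z ∈ pseudohyperbolicBall w R
        · have hz1 : z ∈ Metric.ball (0 : ℂ) 1 := by simpa using hz.1
          have : (w, z) ∈ {p : ℂ × ℂ | p.2 ∈ pseudohyperbolicBall p.1 R} := hz
          simp only [hK, Set.indicator_of_mem hz, Set.indicator_of_mem this, hg,
            Set.indicator_of_mem hz1]
        · have : (w, z) ∉ {p : ℂ × ℂ | p.2 ∈ pseudohyperbolicBall p.1 R} := hz
          simp only [hK, Set.indicator_of_notMem hz, Set.indicator_of_notMem this]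
    _ = ∫⁻ z, ∫⁻ w in Ω, K w z ∂hyperbolicMeasure ∂hyperbolicMeasure :=
        lintegral_lintegral_swap hKm.aemeasurable
    _ ≤ ∫⁻ z, ENNReal.ofReal (hypMaxNyquistDensity Ω R) * g z ∂hyperbolicMeasure := by
        refine lintegral_mono fun z => ?_
        by_cases hz : z ∈ Metric.ball (0 : ℂ) 1
        · have hz1 : ‖z‖ < 1 := by simpa using hz
          calc _ ≤ ∫⁻ w in Ω, (pseudohyperbolicBall z R).indicator (fun _ => g z) w
                ∂hyperbolicMeasure := by
                refine setLIntegral_mono' hΩ fun w hw => ?_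
                have hw1 : ‖w‖ < 1 := by simpa using hsub hw
                by_cases hp : z ∈ pseudohyperbolicBall w R
                · rw [Set.indicator_of_mem (mem_pb_symm hw1 hp)]
                  exact Set.indicator_le_self _ _ _
                · have : (w, z) ∉ {p : ℂ × ℂ | p.2 ∈ pseudohyperbolicBall p.1 R} := hp
                  simp only [hK, Set.indicator_of_notMem this]
                  exact zero_le
            _ = g z * hyperbolicMeasure (Ω ∩ pseudohyperbolicBall z R) := by
                rw [lintegral_indicator (measurableSet_pb z R), setLIntegral_const,
                  Measure.restrict_apply (measurableSet_pb z R), Set.inter_comm]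
            _ ≤ _ := by
                rw [mul_comm]
                gcongr
                exact hyp_le_density hR0 hR1 hz1
        · have hz0 : g z = 0 := by rw [hg, Set.indicator_of_notMem hz]
          have : ∀ w, K w z = 0 := fun w => by
            refine le_antisymm ((Set.indicator_le_self _ _ _).trans hz0.le) zero_le
          simp [this]
    _ = _ := by
        rw [lintegral_const_mul' _ _ ENNReal.ofReal_ne_top, hg,
          lintegral_indicator measurableSet_ball]

end LSB

/-- **hyperbolic large sieve for the Bergman space `A¹_α(𝔻)`.**
Let `α > 1` and let `F ∈ A¹_α(𝔻)`, i.e. `F` analytic on `𝔻` with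
`‖F‖ = (1/π) ∫_𝔻 |F(z)| (1 - |z|²)^{α-2} dz < ∞`.  Then for every `0 < R < 1` and
every measurable `Ω ⊆ 𝔻`, with `C^α(R) = (1/(α-1))(1 - (1 - R²)^{α-1})`:
`(1/π) ∫_Ω |F(z)| (1 - |z|²)^{α-2} dz ≤ 2 ρ_𝔻(Ω, R) C^α(R)⁻¹ ‖F‖`. -/
theorem large_sieve_bergman
    (α : ℝ) (hα : 1 < α)
    (F : ℂ → ℂ) (hF : DifferentiableOn ℂ F (Metric.ball (0 : ℂ) 1))
    (hFint : IntegrableOn (fun z => ‖F z‖ * (1 - ‖z‖ ^ 2) ^ (α - 2))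
      (Metric.ball (0 : ℂ) 1) volume)
    (R : ℝ) (hR0 : 0 < R) (hR1 : R < 1)
    (Ω : Set ℂ) (hΩmeas : MeasurableSet Ω) (hΩsub : Ω ⊆ Metric.ball (0 : ℂ) 1) :
    (1 / Real.pi) * (∫ z in Ω, ‖F z‖ * (1 - ‖z‖ ^ 2) ^ (α - 2)) ≤
      2 * hypMaxNyquistDensity Ω R / ((1 / (α - 1)) * (1 - (1 - R ^ 2) ^ (α - 1))) *
        ((1 / Real.pi) * ∫ z in Metric.ball (0 : ℂ) 1, ‖F z‖ * (1 - ‖z‖ ^ 2) ^ (α - 2)) := by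
  have h := LSB.main_ennreal hα hR0 hR1 hF hΩmeas hΩsub
  rw [LSB.hh_integral hΩmeas hΩsub hFint,
    LSB.hh_integral measurableSet_ball subset_rfl hFint] at h
  set I := ∫ z in Ω, ‖F z‖ * (1 - ‖z‖ ^ 2) ^ (α - 2)
  have hJ : 0 ≤ ∫ z in Metric.ball (0 : ℂ) 1, ‖F z‖ * (1 - ‖z‖ ^ 2) ^ (α - 2) := by
    refine setIntegral_nonneg measurableSet_ball fun z hz => ?_
    have := LSB.one_sub_pos (u := z) (by simpa using hz)
    positivity
  set J := ∫ z in Metric.ball (0 : ℂ) 1, ‖F z‖ * (1 - ‖z‖ ^ 2) ^ (α - 2)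
  have hρ : 0 ≤ hypMaxNyquistDensity Ω R := Real.iSup_nonneg fun _ => ENNReal.toReal_nonneg
  set ρ := hypMaxNyquistDensity Ω R
  have hC : 0 < (1 / (α - 1)) * (1 - (1 - R ^ 2) ^ (α - 1)) := by
    have h1 : (1 - R ^ 2) ^ (α - 1) < 1 :=
      Real.rpow_lt_one (by nlinarith) (by nlinarith) (by linarith)
    have h2 : 0 < α - 1 := by linarith
    have h3 : 0 < 1 - (1 - R ^ 2) ^ (α - 1) := by linarith
    positivity
  set C := (1 / (α - 1)) * (1 - (1 - R ^ 2) ^ (α - 1))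
  have hπ := Real.pi_gt_three
  rw [← ENNReal.ofReal_mul (by positivity), ← ENNReal.ofReal_mul hρ,
    ENNReal.ofReal_le_ofReal_iff (by positivity)] at h
  have h2 : I ≤ 2 * ρ / C * J := by
    rw [div_mul_eq_mul_div, le_div_iff₀ hC]
    have h0 : 0 ≤ ρ * J := by positivity
    by_cases hI : 0 ≤ I
    · have : 0 ≤ I * C := by positivity
      nlinarith
    · have : I * C ≤ 0 := mul_nonpos_of_nonpos_of_nonneg (by linarith) hC.le
      linarith
  calc 1 / Real.pi * I ≤ 1 / Real.pi * (2 * ρ / C * J) := by gcongr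
    _ = _ := by ring
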